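/- arXiv:2507.13866 — 8 statements merged into one kernel-verified Lean document; each statement's English description precedes it below -/
import Mathlib

section
/- A strongly ω-maximal ideal admits a unique representation by a discrete collection of maximal ideals: if D₁ and D₂ are two countably infinite discrete collections of pairwise distinct maximal ideals on ℕ with ⋂ D₁ = ⋂ D₂, then D₁ = D₂ (as sets of ideals). -/
/-!
Under the passage from maximal ideals to dual ultrafilters, the intersection of a collection of
ideals is dual to the intersection of the corresponding ultrafilters, and an ultrafilter lies in the
closure of a set `S` of ultrafilters exactly when it contains `⋂ S`. So the intersection of the
ideals determines the closure of the set of dual ultrafilters. A discrete set is recovered from its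
closure: it consists of the isolated points of the closure.
-/

open Set

def IsIdeal (I : Set (Set ℕ)) : Prop :=
  (∀ A : Set ℕ, A.Finite → A ∈ I) ∧
  (∀ A B : Set ℕ, A ⊆ B → B ∈ I → A ∈ I) ∧
  (∀ A B : Set ℕ, A ∈ I → B ∈ I → A ∪ B ∈ I)

def IsProperIdeal (I : Set (Set ℕ)) : Prop := IsIdeal I ∧ (Set.univ : Set ℕ) ∉ I

def IsMaxIdeal (I : Set (Set ℕ)) : Prop :=
  IsProperIdeal I ∧ ∀ A : Set ℕ, A ∈ I ∨ Aᶜ ∈ I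

/-- `U` is the dual ultrafilter of the (maximal) ideal `I`: `A ∈ U ↔ Aᶜ ∈ I`. -/
def IsDualUltra (I : Set (Set ℕ)) (U : Ultrafilter ℕ) : Prop :=
  ∀ A : Set ℕ, A ∈ U ↔ Aᶜ ∈ I

/-- A set is a discrete subset of a topological space if each of its points is isolated in it. -/
def IsDiscreteSubset {X : Type*} [TopologicalSpace X] (S : Set X) : Prop :=
  ∀ x ∈ S, ∃ V : Set X, IsOpen V ∧ V ∩ S = {x}

/-- The set of dual ultrafilters of a collection of maximal ideals. -/
def DualSet (D : Set (Set (Set ℕ))) : Set (Ultrafilter ℕ) :=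
  {U | ∃ K ∈ D, IsDualUltra K U}

/-- An ideal is strongly ω-maximal if it is the intersection of a countably infinite
discrete collection of pairwise distinct maximal ideals. -/
def StronglyOmegaMax (I : Set (Set ℕ)) : Prop :=
  ∃ J : ℕ → Set (Set ℕ), (∀ n, IsMaxIdeal (J n)) ∧ (∀ m n, m ≠ n → J m ≠ J n) ∧
    (∃ U : ℕ → Ultrafilter ℕ, (∀ n, IsDualUltra (J n) (U n)) ∧
      IsDiscreteSubset (Set.range U)) ∧
    I = ⋂ n, J n

theorem IsDiscreteSubset.subset_of_closure_eq {X : Type*} [TopologicalSpace X] [T1Space X]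
    {S T : Set X} (hS : IsDiscreteSubset S) (h : closure S = closure T) : S ⊆ T := by
  intro x hxS
  obtain ⟨V, hV, hVS⟩ := hS x hxS
  have hxV : x ∈ V := (hVS.ge rfl).1
  have isolated_in_closure : V ∩ closure S ⊆ {x} := by
    simpa only [hVS, closure_singleton] using hV.inter_closure (t := S)
  obtain ⟨y, hyV, hyT⟩ := mem_closure_iff.1 (h.le (subset_closure hxS)) V hV hxV
  have hyx : y = x := isolated_in_closure ⟨hyV, h.ge (subset_closure hyT)⟩
  exact hyx ▸ hyT

theorem ultrafilter_mem_closure_iff {α : Type*} {S : Set (Ultrafilter α)} {U : Ultrafilter α} :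
    U ∈ closure S ↔ ∀ A : Set α, (∀ V ∈ S, A ∈ V) → A ∈ U := by
  refine ⟨fun hU A hA ↦ closure_minimal hA (ultrafilter_isClosed_basic A) hU, fun hU ↦ ?_⟩
  rw [ultrafilterBasis_is_basis.mem_closure_iff]
  rintro _ ⟨A, rfl⟩ (hAU : A ∈ U)
  by_contra hdisj
  have hcompl : ∀ V ∈ S, Aᶜ ∈ V := fun V hV ↦
    Ultrafilter.compl_mem_iff_notMem.2 fun hAV ↦ hdisj ⟨V, hAV, hV⟩
  exact Ultrafilter.compl_mem_iff_notMem.1 (hU Aᶜ hcompl) hAU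

theorem IsDualUltra.mem_iff {K : Set (Set ℕ)} {U : Ultrafilter ℕ} (h : IsDualUltra K U)
    {A : Set ℕ} : A ∈ K ↔ Aᶜ ∈ U := by
  rw [h Aᶜ, compl_compl]

theorem IsDualUltra.left_unique {K L : Set (Set ℕ)} {U : Ultrafilter ℕ} (hK : IsDualUltra K U)
    (hL : IsDualUltra L U) : K = L :=
  Set.ext fun _ ↦ hK.mem_iff.trans hL.mem_iff.symm

theorem IsMaxIdeal.compl_notMem_iff {K : Set (Set ℕ)} (hK : IsMaxIdeal K) {A : Set ℕ} :
    Aᶜ ∉ K ↔ A ∈ K := by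
  obtain ⟨⟨⟨-, -, hunion⟩, hproper⟩, hmax⟩ := hK
  refine ⟨(hmax A).resolve_right, fun hA hAc ↦ hproper ?_⟩
  simpa only [union_compl_self] using hunion A Aᶜ hA hAc

theorem IsMaxIdeal.exists_isDualUltra {K : Set (Set ℕ)} (hK : IsMaxIdeal K) :
    ∃ U : Ultrafilter ℕ, IsDualUltra K U := by
  obtain ⟨hfinite, hsubset, hunion⟩ := hK.1.1
  let F : Filter ℕ := Filter.comk (· ∈ K) (hfinite ∅ finite_empty)
    (fun B hB A hAB ↦ hsubset A B hAB hB) (fun A hA B hB ↦ hunion A B hA hB)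
  have hF (A : Set ℕ) : Aᶜ ∉ F ↔ A ∈ F := hK.compl_notMem_iff
  exact ⟨Ultrafilter.ofComplNotMemIff F hF, fun _ ↦ Iff.rfl⟩

theorem mem_sInter_iff_forall_dualSet {D : Set (Set (Set ℕ))} (hD : ∀ K ∈ D, IsMaxIdeal K)
    {A : Set ℕ} : A ∈ ⋂₀ D ↔ ∀ U ∈ DualSet D, Aᶜ ∈ U := by
  constructor
  · rintro hA U ⟨K, hKD, hKU⟩
    exact hKU.mem_iff.1 (hA K hKD)
  · intro hA K hKD
    obtain ⟨U, hKU⟩ := (hD K hKD).exists_isDualUltra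
    exact hKU.mem_iff.2 (hA U ⟨K, hKD, hKU⟩)

theorem closure_dualSet {D : Set (Set (Set ℕ))} (hD : ∀ K ∈ D, IsMaxIdeal K) :
    closure (DualSet D) = {U | ∀ A ∈ ⋂₀ D, Aᶜ ∈ U} := by
  ext U
  simp only [ultrafilter_mem_closure_iff, mem_ofPred_eq, mem_sInter_iff_forall_dualSet hD]
  exact compl_surjective.forall

theorem subset_of_dualSet_subset {D₁ D₂ : Set (Set (Set ℕ))} (h₁m : ∀ K ∈ D₁, IsMaxIdeal K)
    (h : DualSet D₁ ⊆ DualSet D₂) : D₁ ⊆ D₂ := by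
  intro K hK
  obtain ⟨U, hKU⟩ := (h₁m K hK).exists_isDualUltra
  obtain ⟨L, hL, hLU⟩ := h ⟨K, hK, hKU⟩
  exact hKU.left_unique hLU ▸ hL

theorem unique_discrete_representation_general {D₁ D₂ : Set (Set (Set ℕ))}
    (h₁m : ∀ K ∈ D₁, IsMaxIdeal K) (h₁d : IsDiscreteSubset (DualSet D₁))
    (h₂m : ∀ K ∈ D₂, IsMaxIdeal K) (h₂d : IsDiscreteSubset (DualSet D₂))
    (heq : ⋂₀ D₁ = ⋂₀ D₂) : D₁ = D₂ := by
  have hclosure : closure (DualSet D₁) = closure (DualSet D₂) := by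
    rw [closure_dualSet h₁m, closure_dualSet h₂m, heq]
  exact Subset.antisymm
    (subset_of_dualSet_subset h₁m (h₁d.subset_of_closure_eq hclosure))
    (subset_of_dualSet_subset h₂m (h₂d.subset_of_closure_eq hclosure.symm))

/-- A strongly ω-maximal ideal admits a unique representation by a discrete collection of
maximal ideals: two countably infinite discrete collections of pairwise distinct maximal
ideals with the same intersection coincide. -/
theorem unique_discrete_representation (D₁ D₂ : Set (Set (Set ℕ)))
    (h₁c : D₁.Countable) (h₁i : D₁.Infinite) (h₁m : ∀ K ∈ D₁, IsMaxIdeal K)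
    (h₁d : IsDiscreteSubset (DualSet D₁))
    (h₂c : D₂.Countable) (h₂i : D₂.Infinite) (h₂m : ∀ K ∈ D₂, IsMaxIdeal K)
    (h₂d : IsDiscreteSubset (DualSet D₂))
    (heq : ⋂₀ D₁ = ⋂₀ D₂) : D₁ = D₂ := by
  exact unique_discrete_representation_general h₁m h₁d h₂m h₂d heq
end

section
/- Let I be an ideal on ℕ. Then I = ⋂ E for some countably infinite collection E of pairwise distinct maximal ideals on ℕ whose set of dual ultrafilters E* is a scattered subspace of Ultrafilter ℕ (every nonempty subset of E* has a point isolated in that subset) if and only if I is strongly ω-maximal. -/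
open Set

/-- A set is scattered if every nonempty subset of it has a point isolated in that subset. -/
def IsScatteredSubset {X : Type*} [TopologicalSpace X] (S : Set X) : Prop :=
  ∀ T ⊆ S, T.Nonempty → ∃ x ∈ T, ∃ V : Set X, IsOpen V ∧ V ∩ T = {x}

/-!
The maximal ideals of `ℕ` correspond to the nonprincipal ultrafilters, and `⋂ U ∈ S, dualIdeal U`
depends only on the closure of `S`, because `A` lies in it exactly when the basic open set
`{U | A ∈ U}` misses `S`. A scattered set is contained in the closure of the set of its isolated
points, which is discrete, and which is infinite whenever the scattered set is. Hence a scattered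
representing set may be replaced by the set of its isolated points.
-/

section IsolatedPoints

variable {X : Type*} [TopologicalSpace X] {S T : Set X}

/-- The points of `S` that are isolated in `S`. Its role is to provide a discrete set with the same
closure as a given scattered set. -/
def isolatedPoints (S : Set X) : Set X :=
  {x ∈ S | ∃ V : Set X, IsOpen V ∧ V ∩ S = {x}}

theorem isolatedPoints_subset (S : Set X) : isolatedPoints S ⊆ S :=
  fun _ hx => hx.1

theorem isolatedPoints_inter_subset (hTS : T ⊆ S) : isolatedPoints S ∩ T ⊆ isolatedPoints T := by
  rintro x ⟨⟨_, V, hV, hVS⟩, hxT⟩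
  have hxV : x ∈ V := (hVS.ge rfl).1
  refine ⟨hxT, V, hV, Subset.antisymm ?_ (singleton_subset_iff.2 ⟨hxV, hxT⟩)⟩
  exact (inter_subset_inter_right V hTS).trans hVS.subset

theorem isolatedPoints_inter_of_isOpen_subset {V : Set X} (hV : IsOpen V) (S : Set X) :
    isolatedPoints (V ∩ S) ⊆ isolatedPoints S := by
  rintro x ⟨hx, W, hW, hWx⟩
  exact ⟨hx.2, W ∩ V, hW.inter hV, by rw [inter_assoc, hWx]⟩

theorem isDiscreteSubset_isolatedPoints (S : Set X) : IsDiscreteSubset (isolatedPoints S) :=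
  fun _ hx => (isolatedPoints_inter_subset (isolatedPoints_subset S) ⟨hx, hx⟩).2

theorem IsDiscreteSubset.isScatteredSubset (hS : IsDiscreteSubset S) : IsScatteredSubset S := by
  rintro T hTS ⟨x, hxT⟩
  have hxS : x ∈ isolatedPoints S := ⟨hTS hxT, hS x (hTS hxT)⟩
  exact ⟨x, isolatedPoints_inter_subset hTS ⟨hxS, hxT⟩⟩

theorem IsScatteredSubset.subset_closure_isolatedPoints (hS : IsScatteredSubset S) :
    S ⊆ closure (isolatedPoints S) := by
  intro x hxS
  refine mem_closure_iff.2 fun V hV hxV => ?_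
  obtain ⟨y, hy⟩ : (isolatedPoints (V ∩ S)).Nonempty :=
    hS (V ∩ S) inter_subset_right ⟨x, hxV, hxS⟩
  exact ⟨y, hy.1.1, isolatedPoints_inter_of_isOpen_subset hV S hy⟩

theorem IsScatteredSubset.infinite_isolatedPoints [T1Space X] (hS : IsScatteredSubset S)
    (hinf : S.Infinite) : (isolatedPoints S).Infinite := fun hfin =>
  hinf <| hfin.subset <| hS.subset_closure_isolatedPoints.trans hfin.isClosed.closure_subset

end IsolatedPoints

section DualIdeal

variable {α : Type*}

/-- The ideal dual to an ultrafilter: the sets outside it, equivalently the complements of its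
members. It inverts the passage from a maximal ideal to its dual ultrafilter. -/
def dualIdeal (U : Ultrafilter α) : Set (Set α) :=
  {A | A ∉ U}

theorem mem_dualIdeal {U : Ultrafilter α} {A : Set α} : A ∈ dualIdeal U ↔ A ∉ U :=
  Iff.rfl

theorem dualIdeal_injective : Function.Injective (dualIdeal : Ultrafilter α → Set (Set α)) :=
  fun _ _ h => Ultrafilter.ext fun A => not_iff_not.1 (Set.ext_iff.1 h A)

theorem biInter_dualIdeal_closure (S : Set (Ultrafilter α)) :
    ⋂ U ∈ closure S, dualIdeal U = ⋂ U ∈ S, dualIdeal U := by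
  refine Subset.antisymm (biInter_subset_biInter_left subset_closure) fun A hA => ?_
  refine mem_iInter₂.2 fun U hU hAU => ?_
  obtain ⟨V, hAV, hVS⟩ := mem_closure_iff.1 hU {V | A ∈ V} (ultrafilter_isOpen_basic A) hAU
  exact mem_iInter₂.1 hA V hVS hAV

theorem biInter_dualIdeal_eq_of_subset_closure {S T : Set (Ultrafilter α)} (hTS : T ⊆ S)
    (hST : S ⊆ closure T) : ⋂ U ∈ S, dualIdeal U = ⋂ U ∈ T, dualIdeal U := by
  refine Subset.antisymm (biInter_subset_biInter_left hTS) ?_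
  rw [← biInter_dualIdeal_closure T]
  exact biInter_subset_biInter_left hST

end DualIdeal

section Representations

variable {I K : Set (Set ℕ)} {E : Set (Set (Set ℕ))}

theorem isDualUltra_iff_dualIdeal_eq {U : Ultrafilter ℕ} : IsDualUltra K U ↔ dualIdeal U = K := by
  constructor
  · intro h
    ext A
    rw [mem_dualIdeal, ← Ultrafilter.compl_mem_iff_notMem, h, compl_compl]
  · rintro rfl A
    rw [mem_dualIdeal, Ultrafilter.compl_notMem_iff]

theorem dualSet_eq_preimage (E : Set (Set (Set ℕ))) : DualSet E = dualIdeal ⁻¹' E := by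
  ext U
  simp only [DualSet, isDualUltra_iff_dualIdeal_eq, mem_ofPred_eq, exists_eq_right', mem_preimage]

theorem IsMaxIdeal.mem_range_dualIdeal (hK : IsMaxIdeal K) :
    K ∈ range (dualIdeal : Ultrafilter ℕ → Set (Set ℕ)) := by
  obtain ⟨⟨⟨hfinite, hsubset, hunion⟩, huniv⟩, hmax⟩ := hK
  let F : Filter ℕ := Filter.comk (· ∈ K) (hfinite ∅ finite_empty)
    (fun B hB A hAB => hsubset A B hAB hB) (fun A hA B hB => hunion A B hA hB)
  have mem_F_iff (A : Set ℕ) : A ∈ F ↔ Aᶜ ∈ K := Filter.mem_comk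
  have compl_notMem_F_iff (A : Set ℕ) : Aᶜ ∉ F ↔ A ∈ F := by
    rw [mem_F_iff, mem_F_iff, compl_compl]
    refine ⟨(hmax A).resolve_left, fun hAc hA => huniv ?_⟩
    exact union_compl_self A ▸ hunion A Aᶜ hA hAc
  exact ⟨Ultrafilter.ofComplNotMemIff F compl_notMem_F_iff,
    isDualUltra_iff_dualIdeal_eq.1 mem_F_iff⟩

theorem image_dualIdeal_dualSet (hE : ∀ K ∈ E, IsMaxIdeal K) : dualIdeal '' DualSet E = E := by
  rw [dualSet_eq_preimage]
  exact image_preimage_eq_of_subset fun K hK => (hE K hK).mem_range_dualIdeal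

/-- `S` is a countably infinite set of ultrafilters whose dual ideals are maximal, i.e. contain the
finite sets, and intersect to `I`. This is the common part of scattered and discrete
representations of `I`, phrased through the ultrafilters instead of the ideals. -/
structure IsOmegaRepresentation (I : Set (Set ℕ)) (S : Set (Ultrafilter ℕ)) : Prop where
  countable : S.Countable
  infinite : S.Infinite
  isMaxIdeal : ∀ U ∈ S, IsMaxIdeal (dualIdeal U)
  eq_biInter : I = ⋂ U ∈ S, dualIdeal U

theorem exists_isScatteredSubset_dualSet_iff :
    (∃ E : Set (Set (Set ℕ)), E.Countable ∧ E.Infinite ∧ (∀ K ∈ E, IsMaxIdeal K) ∧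
      IsScatteredSubset (DualSet E) ∧ I = ⋂₀ E) ↔
    ∃ S, IsOmegaRepresentation I S ∧ IsScatteredSubset S := by
  constructor
  · rintro ⟨E, hcount, hinf, hmax, hscat, rfl⟩
    have himage : dualIdeal '' DualSet E = E := image_dualIdeal_dualSet hmax
    refine ⟨DualSet E, ⟨?_, ?_, ?_, ?_⟩, hscat⟩
    · exact countable_of_injective_of_countable_image dualIdeal_injective.injOn (by rwa [himage])
    · exact Infinite.of_image dualIdeal (by rwa [himage])
    · exact fun U hU => hmax _ (himage ▸ mem_image_of_mem dualIdeal hU)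
    · rw [← sInter_image, himage]
  · rintro ⟨S, ⟨hcount, hinf, hmax, rfl⟩, hscat⟩
    refine ⟨dualIdeal '' S, hcount.image _, hinf.image dualIdeal_injective.injOn,
      forall_mem_image.2 hmax, ?_, (sInter_image _ _).symm⟩
    rwa [dualSet_eq_preimage, preimage_image_eq S dualIdeal_injective]

theorem stronglyOmegaMax_iff_exists_isDiscreteSubset :
    StronglyOmegaMax I ↔ ∃ S, IsOmegaRepresentation I S ∧ IsDiscreteSubset S := by
  constructor
  · rintro ⟨J, hmax, hne, ⟨U, hdual, hdisc⟩, rfl⟩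
    obtain rfl : (fun n => dualIdeal (U n)) = J :=
      funext fun n => isDualUltra_iff_dualIdeal_eq.1 (hdual n)
    have hinj : Function.Injective U := fun m n hmn =>
      by_contra fun h => hne m n h (congrArg dualIdeal hmn)
    exact ⟨range U, ⟨countable_range U, infinite_range_of_injective hinj,
      forall_mem_range.2 hmax, biInter_range.symm⟩, hdisc⟩
  · rintro ⟨S, ⟨hcount, hinf, hmax, rfl⟩, hdisc⟩
    obtain ⟨_⟩ := countable_infinite_iff_nonempty_denumerable.1 ⟨hcount, hinf⟩
    let U : ℕ ≃ S := (Denumerable.eqv S).symm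
    have hrange : range (fun n => (U n : Ultrafilter ℕ)) = S :=
      (U.surjective.range_comp Subtype.val).trans Subtype.range_coe
    refine ⟨fun n => dualIdeal (U n), fun n => hmax _ (U n).2, fun m n hmn h => hmn ?_,
      ⟨fun n => U n, fun n => isDualUltra_iff_dualIdeal_eq.2 rfl, hrange.symm ▸ hdisc⟩, ?_⟩
    · exact U.injective (Subtype.ext (dualIdeal_injective h))
    · rw [← biInter_range (f := fun n => (U n : Ultrafilter ℕ)) (g := dualIdeal), hrange]

theorem IsOmegaRepresentation.isolatedPoints {S : Set (Ultrafilter ℕ)}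
    (hS : IsOmegaRepresentation I S) (hscat : IsScatteredSubset S) :
    IsOmegaRepresentation I (isolatedPoints S) where
  countable := hS.countable.mono (isolatedPoints_subset S)
  infinite := hscat.infinite_isolatedPoints hS.infinite
  isMaxIdeal U hU := hS.isMaxIdeal U (isolatedPoints_subset S hU)
  eq_biInter := hS.eq_biInter.trans <|
    biInter_dualIdeal_eq_of_subset_closure (isolatedPoints_subset S)
      hscat.subset_closure_isolatedPoints

end Representations

/-- An ideal is the intersection of a countably infinite collection of pairwise distinct
maximal ideals whose dual ultrafilters form a scattered subspace of `Ultrafilter ℕ`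
iff it is strongly ω-maximal. -/
theorem scattered_representation_iff_stronglyOmegaMax (I : Set (Set ℕ)) (hI : IsIdeal I) :
    (∃ E : Set (Set (Set ℕ)), E.Countable ∧ E.Infinite ∧ (∀ K ∈ E, IsMaxIdeal K) ∧
      IsScatteredSubset (DualSet E) ∧ I = ⋂₀ E) ↔ StronglyOmegaMax I := by
  rw [exists_isScatteredSubset_dualSet_iff, stronglyOmegaMax_iff_exists_isDiscreteSubset]
  constructor
  · rintro ⟨S, hS, hscat⟩
    exact ⟨isolatedPoints S, hS.isolatedPoints hscat, isDiscreteSubset_isolatedPoints S⟩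
  · rintro ⟨S, hS, hdisc⟩
    exact ⟨S, hS, hdisc.isScatteredSubset⟩
end

section
/- Let I ⊊ J be ideals on ℕ and let k be a positive integer. Then I is k-maximal in J if and only if there exists an (I,J,k)-family. -/
open Set

/-- `I` is `k`-maximal in `J`: `I` is the intersection of `J` with `k` pairwise distinct
maximal ideals, none of which contains `J`. -/
def kMaximalIn (I J : Set (Set ℕ)) (k : ℕ) : Prop :=
  ∃ L : Fin k → Set (Set ℕ), Function.Injective L ∧ (∀ i, IsMaxIdeal (L i)) ∧
    (∀ i, ¬ J ⊆ L i) ∧ I = (⋂ i, L i) ∩ J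

/-- An `(I,J,k)`-family: pairwise disjoint sets `A_1, …, A_k ∈ J \ I` almost covering
`J \ I`, on each of which `I` restricts to a maximal ideal. -/
def IJkFamily (I J : Set (Set ℕ)) (k : ℕ) (A : Fin k → Set ℕ) : Prop :=
  (∀ i, A i ∈ J ∧ A i ∉ I) ∧
  (Pairwise fun i j => Disjoint (A i) (A j)) ∧
  (∀ B ∈ J, B ∉ I → B \ (⋃ i, A i) ∈ I) ∧
  (∀ i, A i ∉ I ∧ ∀ C ⊆ A i, C ∈ I ∨ A i \ C ∈ I)

/-!
The two descriptions are linked by `L i = (I : A i)`, where `(I : A) = {C | C ∩ A ∈ I}`.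

Given an `(I,J,k)`-family, the ideals `(I : A i)` are maximal because `I↾(A i)` is, they are
distinct because the `A i` are disjoint, and their intersection is `(I : ⋃ i, A i)`, which meets
`J` in `I`.

Conversely, the filters dual to distinct maximal ideals `L i` are pairwise disjoint, hence contain
pairwise disjoint sets `T i`. Choosing `B i ∈ J \ L i`, put `A i = B i ∩ T i`. Then `A i` lies in
`L j` for every `j ≠ i` but its complement lies in `L i`, so `L i = (I : A i)`.
-/

namespace IsIdeal

variable {I : Set (Set ℕ)} {A B : Set ℕ}

theorem finite_mem (hI : IsIdeal I) (hA : A.Finite) : A ∈ I :=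
  hI.1 A hA

theorem mem_of_subset (hI : IsIdeal I) (hAB : A ⊆ B) (hB : B ∈ I) : A ∈ I :=
  hI.2.1 A B hAB hB

theorem union_mem (hI : IsIdeal I) (hA : A ∈ I) (hB : B ∈ I) : A ∪ B ∈ I :=
  hI.2.2 A B hA hB

/-- The filter dual to an ideal `I`, consisting of the complements of the members of `I`; it gives
access to Mathlib's results on finite intersections and on separation of disjoint filters. -/
def dualFilter (hI : IsIdeal I) : Filter ℕ :=
  Filter.comk (· ∈ I) (hI.finite_mem finite_empty) (fun _ ht _ hst => hI.mem_of_subset hst ht)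
    (fun _ hs _ ht => hI.union_mem hs ht)

theorem mem_dualFilter (hI : IsIdeal I) : A ∈ hI.dualFilter ↔ Aᶜ ∈ I :=
  Filter.mem_comk

theorem iUnion_mem_iff {ι : Type*} [Finite ι] (hI : IsIdeal I) {A : ι → Set ℕ} :
    (⋃ i, A i) ∈ I ↔ ∀ i, A i ∈ I := by
  simpa only [mem_dualFilter, compl_iInter, compl_compl] using
    Filter.iInter_mem (f := hI.dualFilter) (s := fun i => (A i)ᶜ)

theorem mem_of_inter_mem_of_sdiff_mem (hI : IsIdeal I) (hinter : B ∩ A ∈ I)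
    (hsdiff : B \ A ∈ I) : B ∈ I :=
  inter_union_sdiff B A ▸ hI.union_mem hinter hsdiff

theorem inter_mem_iff_of_compl_mem (hI : IsIdeal I) (hA : Aᶜ ∈ I) : B ∩ A ∈ I ↔ B ∈ I :=
  ⟨fun h => hI.mem_of_inter_mem_of_sdiff_mem h (hI.mem_of_subset inter_subset_right hA),
    hI.mem_of_subset inter_subset_left⟩

end IsIdeal

theorem IsProperIdeal.compl_notMem {I : Set (Set ℕ)} {A : Set ℕ} (hI : IsProperIdeal I)
    (hA : A ∈ I) : Aᶜ ∉ I :=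
  fun hAc => hI.2 (union_compl_self A ▸ hI.1.union_mem hA hAc)

namespace IsMaxIdeal

variable {L M : Set (Set ℕ)} {A : Set ℕ}

theorem isIdeal (hL : IsMaxIdeal L) : IsIdeal L :=
  hL.1.1

theorem compl_mem_iff (hL : IsMaxIdeal L) : Aᶜ ∈ L ↔ A ∉ L :=
  ⟨fun hAc hA => hL.1.compl_notMem hA hAc, (hL.2 A).resolve_left⟩

theorem eq_of_subset (hL : IsMaxIdeal L) (hM : IsProperIdeal M) (hLM : L ⊆ M) : L = M :=
  hLM.antisymm fun _ hA =>
    by_contra fun hAL => hM.compl_notMem hA (hLM (hL.compl_mem_iff.2 hAL))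

theorem disjoint_dualFilter (hL : IsMaxIdeal L) (hM : IsMaxIdeal M) (hne : L ≠ M) :
    Disjoint hL.isIdeal.dualFilter hM.isIdeal.dualFilter := by
  obtain ⟨T, hTL, hTM⟩ := not_subset.1 (mt (hL.eq_of_subset hM.1) hne)
  have hTcL : Tᶜ ∈ hL.isIdeal.dualFilter := by
    rwa [IsIdeal.mem_dualFilter, compl_compl]
  have hTdualM : T ∈ hM.isIdeal.dualFilter :=
    hM.isIdeal.mem_dualFilter.2 (hM.compl_mem_iff.2 hTM)
  exact Filter.disjoint_iff.2 ⟨Tᶜ, hTcL, T, hTdualM, disjoint_compl_left⟩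

end IsMaxIdeal

theorem exists_pairwise_disjoint_compl_mem {ι : Type*} [Finite ι] {L : ι → Set (Set ℕ)}
    (hL : ∀ i, IsMaxIdeal (L i)) (hinj : Function.Injective L) :
    ∃ T : ι → Set ℕ, Pairwise (Function.onFun Disjoint T) ∧ ∀ i, (T i)ᶜ ∈ L i := by
  have hdisj : Pairwise (Function.onFun Disjoint fun i => (hL i).isIdeal.dualFilter) :=
    fun i j hij => (hL i).disjoint_dualFilter (hL j) (hinj.ne hij)
  obtain ⟨T, hT, hTdisj⟩ := hdisj.exists_mem_filter_of_disjoint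
  exact ⟨T, hTdisj, fun i => (hL i).isIdeal.mem_dualFilter.1 (hT i)⟩

theorem exists_pairwise_disjoint_mem_compl_mem {ι : Type*} [Finite ι] {L : ι → Set (Set ℕ)}
    {J : Set (Set ℕ)} (hJ : IsIdeal J) (hL : ∀ i, IsMaxIdeal (L i)) (hinj : Function.Injective L)
    (hJL : ∀ i, ¬ J ⊆ L i) :
    ∃ A : ι → Set ℕ, Pairwise (Function.onFun Disjoint A) ∧ ∀ i, A i ∈ J ∧ (A i)ᶜ ∈ L i := by
  obtain ⟨T, hTdisj, hTL⟩ := exists_pairwise_disjoint_compl_mem hL hinj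
  choose B hBJ hBL using fun i => not_subset.1 (hJL i)
  refine ⟨fun i => B i ∩ T i,
    fun i j hij => (hTdisj hij).mono inter_subset_right inter_subset_right,
    fun i => ⟨hJ.mem_of_subset inter_subset_left (hBJ i), ?_⟩⟩
  rw [compl_inter]
  exact (hL i).isIdeal.union_mem ((hL i).compl_mem_iff.2 (hBL i)) (hTL i)

/-- The colon ideal `(I : A)`, computed in the Boolean ring of subsets of `ℕ`, whose product is `∩`.
The restriction `I↾A` is a maximal ideal on `A` exactly when `(I : A)` is a maximal ideal on `ℕ`,
so colon ideals turn maximality on subsets into `IsMaxIdeal`. -/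
def colonIdeal (I : Set (Set ℕ)) (A : Set ℕ) : Set (Set ℕ) :=
  {C | C ∩ A ∈ I}

section colonIdeal

variable {I J : Set (Set ℕ)} {A C : Set ℕ}

theorem mem_colonIdeal : C ∈ colonIdeal I A ↔ C ∩ A ∈ I :=
  Iff.rfl

theorem self_mem_colonIdeal : A ∈ colonIdeal I A ↔ A ∈ I := by
  rw [mem_colonIdeal, inter_self]

theorem isIdeal_colonIdeal (hI : IsIdeal I) (A : Set ℕ) : IsIdeal (colonIdeal I A) := by
  refine ⟨fun C hC => hI.finite_mem (hC.inter_of_left A),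
    fun C D hCD hD => hI.mem_of_subset (inter_subset_inter_left A hCD) hD, fun C D hC hD => ?_⟩
  rw [mem_colonIdeal, union_inter_distrib_right]
  exact hI.union_mem hC hD

theorem isMaxIdeal_colonIdeal (hI : IsIdeal I) (hA : A ∉ I)
    (hmax : ∀ C ⊆ A, C ∈ I ∨ A \ C ∈ I) : IsMaxIdeal (colonIdeal I A) := by
  refine ⟨⟨isIdeal_colonIdeal hI A, ?_⟩, fun C => ?_⟩
  · rwa [mem_colonIdeal, univ_inter]
  · have h := hmax (C ∩ A) inter_subset_right
    rwa [sdiff_inter_self_eq_sdiff, sdiff_eq_compl_inter] at h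

theorem IsMaxIdeal.notMem_of_colonIdeal (h : IsMaxIdeal (colonIdeal I A)) : A ∉ I := by
  simpa only [mem_colonIdeal, univ_inter] using h.1.2

theorem IsMaxIdeal.mem_or_sdiff_mem_of_colonIdeal (h : IsMaxIdeal (colonIdeal I A)) (hC : C ⊆ A) :
    C ∈ I ∨ A \ C ∈ I := by
  simpa only [mem_colonIdeal, inter_eq_left.2 hC, ← sdiff_eq_compl_inter] using h.2 C

theorem colonIdeal_iUnion {ι : Type*} [Finite ι] (hI : IsIdeal I) (A : ι → Set ℕ) :
    colonIdeal I (⋃ i, A i) = ⋂ i, colonIdeal I (A i) := by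
  ext C
  simp only [mem_colonIdeal, mem_iInter, inter_iUnion, hI.iUnion_mem_iff]

theorem colonIdeal_inter_eq (hI : IsIdeal I) (hIJ : I ⊆ J)
    (hA : ∀ B ∈ J, B ∉ I → B \ A ∈ I) : colonIdeal I A ∩ J = I := by
  refine Subset.antisymm (fun C ⟨hCA, hCJ⟩ => ?_)
    fun C hC => ⟨hI.mem_of_subset inter_subset_left hC, hIJ hC⟩
  by_contra hCI
  exact hCI (hI.mem_of_inter_mem_of_sdiff_mem hCA (hA C hCJ hCI))

theorem colonIdeal_injective {ι : Type*} {A : ι → Set ℕ} (hI : IsIdeal I)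
    (hdisj : Pairwise (Function.onFun Disjoint A)) (hA : ∀ i, A i ∉ I) :
    Function.Injective fun i => colonIdeal I (A i) := by
  intro i j (hij : colonIdeal I (A i) = colonIdeal I (A j))
  by_contra hne
  have hmem : A i ∈ colonIdeal I (A j) := by
    rw [mem_colonIdeal, (hdisj hne).inter_eq]
    exact hI.finite_mem finite_empty
  exact hA i (self_mem_colonIdeal.1 (hij ▸ hmem))

theorem colonIdeal_iInter_inter {ι : Type*} {L : ι → Set (Set ℕ)} (hJ : IsIdeal J)
    (hL : ∀ i, IsIdeal (L i)) (hAJ : A ∈ J) {i : ι} (hAi : Aᶜ ∈ L i) (hAj : ∀ j ≠ i, A ∈ L j) :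
    colonIdeal ((⋂ j, L j) ∩ J) A = L i := by
  ext C
  rw [mem_colonIdeal, ← (hL i).inter_mem_iff_of_compl_mem hAi]
  refine ⟨fun h => mem_iInter.1 h.1 i,
    fun h => ⟨mem_iInter.2 fun j => ?_, hJ.mem_of_subset inter_subset_right hAJ⟩⟩
  obtain rfl | hji := eq_or_ne j i
  · exact h
  · exact (hL j).mem_of_subset inter_subset_right (hAj j hji)

end colonIdeal

theorem kMaximalIn.exists_IJkFamily {I J : Set (Set ℕ)} {k : ℕ} (h : kMaximalIn I J k)
    (hJ : IsIdeal J) : ∃ A : Fin k → Set ℕ, IJkFamily I J k A := by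
  obtain ⟨L, hinj, hL, hJL, rfl⟩ := h
  obtain ⟨A, hdisj, hA⟩ := exists_pairwise_disjoint_mem_compl_mem hJ hL hinj hJL
  choose hAJ hAL using hA
  have hLid : ∀ i, IsIdeal (L i) := fun i => (hL i).isIdeal
  have hAj : ∀ i, ∀ j ≠ i, A i ∈ L j := fun i j hji =>
    (hLid j).mem_of_subset (hdisj hji).subset_compl_left (hAL j)
  have hmax : ∀ i, IsMaxIdeal (colonIdeal ((⋂ j, L j) ∩ J) (A i)) := fun i => by
    rw [colonIdeal_iInter_inter hJ hLid (hAJ i) (hAL i) (hAj i)]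
    exact hL i
  have hcover : ∀ B ∈ J, B \ (⋃ i, A i) ∈ (⋂ i, L i) ∩ J := fun B hB =>
    ⟨mem_iInter.2 fun i => (hLid i).mem_of_subset
        (fun _ hx hxA => hx.2 (mem_iUnion_of_mem i hxA)) (hAL i),
      hJ.mem_of_subset sdiff_subset hB⟩
  exact ⟨A, fun i => ⟨hAJ i, (hmax i).notMem_of_colonIdeal⟩, hdisj, fun B hB _ => hcover B hB,
    fun i => ⟨(hmax i).notMem_of_colonIdeal, fun _ => (hmax i).mem_or_sdiff_mem_of_colonIdeal⟩⟩

theorem IJkFamily.kMaximalIn {I J : Set (Set ℕ)} {k : ℕ} {A : Fin k → Set ℕ}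
    (hA : IJkFamily I J k A) (hI : IsIdeal I) (hIJ : I ⊆ J) : kMaximalIn I J k := by
  obtain ⟨hmem, hdisj, hcover, hmax⟩ := hA
  refine ⟨fun i => colonIdeal I (A i), colonIdeal_injective hI hdisj fun i => (hmem i).2,
    fun i => isMaxIdeal_colonIdeal hI (hmax i).1 (hmax i).2,
    fun i hJ => (hmem i).2 (self_mem_colonIdeal.1 (hJ (hmem i).1)), ?_⟩
  rw [← colonIdeal_iUnion hI, colonIdeal_inter_eq hI hIJ hcover]

/-- `I` is `k`-maximal in `J` iff there exists an `(I,J,k)`-family. -/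
theorem kMaximalIn_iff_IJkFamily (I J : Set (Set ℕ)) (hI : IsIdeal I) (hJ : IsIdeal J)
    (hIJ : I ⊆ J) (hne : I ≠ J) (k : ℕ) (hk : 0 < k) :
    kMaximalIn I J k ↔ ∃ A : Fin k → Set ℕ, IJkFamily I J k A :=
  ⟨fun h => h.exists_IJkFamily hJ, fun ⟨_, hA⟩ => hA.kMaximalIn hI hIJ⟩
end

section
/- If I is a strongly ω-maximal ideal on ℕ, then I is complemented, i.e., there exists a continuous linear map P : ℓ∞ → ℓ∞ with P ∘ P = P whose range is c_{0,I}. -/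
open Set

/-- ℓ∞, the space of bounded real sequences with the sup norm. -/
noncomputable abbrev ellInf := lp (fun _ : ℕ => ℝ) ⊤

/-- The indicator sequence of a set `A ⊆ ℕ`, as an element of ℓ∞. -/
noncomputable def chi (A : Set ℕ) : ellInf :=
  ⟨A.indicator (fun _ => (1:ℝ)), by
    apply memℓp_infty
    refine ⟨1, ?_⟩
    rintro r ⟨n, rfl⟩
    by_cases h : n ∈ A <;> simp [h]⟩

/-- `c_{0,I}`: the set of bounded sequences `I`-converging to `0`. -/
def c0I (I : Set (Set ℕ)) : Set ellInf := {x | ∀ ε > 0, {n : ℕ | ε ≤ |x n|} ∈ I}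

/-- An ideal `I` is complemented if `c_{0,I}` is the range of a continuous
linear projection on ℓ∞. -/
def IdealComplemented (I : Set (Set ℕ)) : Prop :=
  ∃ P : ellInf →L[ℝ] ellInf, (∀ x, P (P x) = P x) ∧ Set.range P = c0I I

/-!
A bounded sequence lies in `c_{0,I}` exactly when its limit along each of the ultrafilters `U n`
dual to the given maximal ideals is `0`. As these ultrafilters form a countable discrete set, one
can choose `v : ℕ → {U n | n}` with `v k = U n` for `U n`-almost every `k`. Replacing the `k`-th
term of `x` by the limit of `x` along `v k` leaves all the limits along the `U n` unchanged. It is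
therefore an idempotent operator `T` of norm at most one with kernel `c_{0,I}`, and `1 - T` is the
projection sought.
-/

section UltrafilterLimit

open Filter Topology

variable {α E : Type*} [NormedAddCommGroup E] [ProperSpace E]

theorem tendsto_limUnder_ultrafilter (u : Ultrafilter α) (x : lp (fun _ : α => E) ⊤) :
    Tendsto x u (𝓝 (limUnder (u : Filter α) x)) := by
  have hx : ∀ k, x k ∈ Metric.closedBall 0 ‖x‖ := fun k => by
    simpa using lp.norm_apply_le_norm ENNReal.top_ne_zero x k
  obtain ⟨a, -, ha⟩ := (isCompact_closedBall (0 : E) ‖x‖).ultrafilter_le_nhds (u.map x)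
    (tendsto_principal.2 (.of_forall hx))
  exact tendsto_nhds_limUnder ⟨a, ha⟩

theorem norm_limUnder_ultrafilter_le (u : Ultrafilter α) (x : lp (fun _ : α => E) ⊤) :
    ‖limUnder (u : Filter α) x‖ ≤ ‖x‖ :=
  le_of_tendsto (tendsto_limUnder_ultrafilter u x).norm
    (.of_forall (lp.norm_apply_le_norm ENNReal.top_ne_zero x))

variable (𝕜 : Type*) [NormedField 𝕜] [NormedSpace 𝕜 E]

/-- The operator on bounded functions sending `x` to the function whose value at `k` is the limit
of `x` along the ultrafilter `v k`. -/
noncomputable def ultraLimMap (v : α → Ultrafilter α) :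
    lp (fun _ : α => E) ⊤ →L[𝕜] lp (fun _ : α => E) ⊤ :=
  LinearMap.mkContinuous
    { toFun := fun x => ⟨fun k => limUnder (v k : Filter α) x, memℓp_infty
        ⟨‖x‖, forall_mem_range.2 fun k => norm_limUnder_ultrafilter_le (v k) x⟩⟩
      map_add' := fun x y => lp.ext <| funext fun k =>
        ((tendsto_limUnder_ultrafilter (v k) x).add
          (tendsto_limUnder_ultrafilter (v k) y)).limUnder_eq
      map_smul' := fun c x => lp.ext <| funext fun k =>
        ((tendsto_limUnder_ultrafilter (v k) x).const_smul c).limUnder_eq }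
    1 fun x => by
      rw [one_mul]
      exact lp.norm_le_of_forall_le (norm_nonneg x) fun k => norm_limUnder_ultrafilter_le (v k) x

variable {𝕜}

theorem ultraLimMap_apply (v : α → Ultrafilter α) (x : lp (fun _ : α => E) ⊤) (k : α) :
    ultraLimMap 𝕜 v x k = limUnder (v k : Filter α) x :=
  rfl

theorem ultraLimMap_eq_zero_iff {v : α → Ultrafilter α} {x : lp (fun _ : α => E) ⊤} :
    ultraLimMap 𝕜 v x = 0 ↔ ∀ u ∈ range v, Tendsto x u (𝓝 0) := by
  rw [forall_mem_range]
  refine ⟨fun hx k => ?_, fun hx => lp.ext <| funext fun k => (hx k).limUnder_eq⟩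
  have hlim : limUnder (v k : Filter α) x = 0 := by
    rw [← ultraLimMap_apply (𝕜 := 𝕜), hx, lp.coeFn_zero, Pi.zero_apply]
  exact hlim ▸ tendsto_limUnder_ultrafilter (v k) x

theorem isIdempotentElem_ultraLimMap {v : α → Ultrafilter α}
    (hv : ∀ k, ∀ᶠ j in v k, v j = v k) :
    IsIdempotentElem (ultraLimMap 𝕜 v : lp (fun _ : α => E) ⊤ →L[𝕜] lp (fun _ : α => E) ⊤) := by
  ext x k
  have hconst : ∀ᶠ j in v k, ultraLimMap 𝕜 v x k = ultraLimMap 𝕜 v x j :=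
    (hv k).mono fun j hj => by rw [ultraLimMap_apply, ultraLimMap_apply, hj]
  exact (tendsto_const_nhds.congr' hconst).limUnder_eq

end UltrafilterLimit

namespace IsDiscreteSubset

open Filter

variable {α : Type*} {S : Set (Ultrafilter α)}

theorem exists_mem_forall_eq (hd : IsDiscreteSubset S) {u : Ultrafilter α} (hu : u ∈ S) :
    ∃ A ∈ u, ∀ w ∈ S, A ∈ w → w = u := by
  obtain ⟨V, hV, hVS⟩ := hd u hu
  have huV : u ∈ V := (hVS.ge rfl).1
  obtain ⟨_, ⟨A, rfl⟩, hA, hAV⟩ := ultrafilterBasis_is_basis.exists_subset_of_mem_open huV hV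
  exact ⟨A, hA, fun w hw hAw => hVS.le ⟨hAV hAw, hw⟩⟩

theorem exists_range_eq_forall_eventually_eq (hd : IsDiscreteSubset S) (hc : S.Countable)
    (hne : S.Nonempty) :
    ∃ v : α → Ultrafilter α, range v = S ∧ ∀ k, ∀ᶠ j in v k, v j = v k := by
  obtain ⟨e, rfl⟩ := hc.exists_eq_range hne
  choose A hA hsep using fun n => hd.exists_mem_forall_eq (mem_range_self n)
  -- The sets `A n` may overlap, so `k` is assigned to the first one containing it.
  let first (k : α) : ℕ := sInf {n | k ∈ A n}
  have hfirst (n : ℕ) : ∀ᶠ k in e n, e (first k) = e n := by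
    have hle : ∀ᶠ k in e n, ∀ m ∈ Iic n, k ∈ A m → e m = e n := by
      refine (eventually_all_finite (finite_Iic n)).2 fun m _ => ?_
      by_cases hm : A m ∈ e n
      · exact .of_forall fun _ _ => (hsep m _ (mem_range_self n) hm).symm
      · exact mem_of_superset (Ultrafilter.compl_mem_iff_notMem.2 hm) fun _ hk hk' => absurd hk' hk
    filter_upwards [hA n, hle] with k hk hk_le
    have hmem : first k ∈ {n | k ∈ A n} := Nat.sInf_mem ⟨n, hk⟩
    exact hk_le _ (Nat.sInf_le hk) hmem
  refine ⟨e ∘ first, (range_comp_subset_range first e).antisymm ?_, fun k => hfirst (first k)⟩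
  rintro _ ⟨n, rfl⟩
  exact (hfirst n).exists

end IsDiscreteSubset

section Ideal

open Filter Topology

theorem c0I_iInter {ι : Type*} (J : ι → Set (Set ℕ)) : c0I (⋂ i, J i) = ⋂ i, c0I (J i) := by
  ext x
  simp only [c0I, mem_ofPred_eq, mem_iInter]
  exact ⟨fun h i ε hε => h ε hε i, fun h ε hε i => h i ε hε⟩

theorem IsDualUltra.mem_c0I_iff {J : Set (Set ℕ)} {U : Ultrafilter ℕ} (hU : IsDualUltra J U)
    {x : ellInf} : x ∈ c0I J ↔ Tendsto x U (𝓝 0) := by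
  have hmem (ε : ℝ) : {k | ε ≤ |x k|} ∈ J ↔ ∀ᶠ k in U, dist (x k) 0 < ε := by
    rw [← compl_compl {k | ε ≤ |x k|}, ← hU]
    simp only [compl_ofPred, not_le, dist_zero_right, Real.norm_eq_abs]
    rfl
  simp only [c0I, mem_ofPred_eq, hmem, Metric.tendsto_nhds]

theorem idealComplemented_of_isIdempotentElem {I : Set (Set ℕ)} {T : ellInf →L[ℝ] ellInf}
    (hT : IsIdempotentElem T) (hI : ∀ x, x ∈ c0I I ↔ T x = 0) : IdealComplemented I := by
  refine ⟨1 - T, fun x => DFunLike.congr_fun hT.one_sub x, ?_⟩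
  have hker := LinearMap.IsIdempotentElem.ker_eq_range_one_sub
    (ContinuousLinearMap.IsIdempotentElem.toLinearMap hT)
  ext x
  rw [hI]
  exact (SetLike.ext_iff.1 hker x).symm

end Ideal

theorem stronglyOmegaMax_complemented_general {ι : Type*} [Countable ι] [Nonempty ι]
    {J : ι → Set (Set ℕ)} {U : ι → Ultrafilter ℕ} (hU : ∀ i, IsDualUltra (J i) (U i))
    (hd : IsDiscreteSubset (range U)) : IdealComplemented (⋂ i, J i) := by
  obtain ⟨v, hrange, hv⟩ :=
    hd.exists_range_eq_forall_eventually_eq (countable_range U) (range_nonempty U)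
  refine idealComplemented_of_isIdempotentElem (isIdempotentElem_ultraLimMap hv) fun x => ?_
  rw [ultraLimMap_eq_zero_iff, hrange, forall_mem_range, c0I_iInter, mem_iInter]
  exact forall_congr' fun i => (hU i).mem_c0I_iff

/-- Every strongly ω-maximal ideal is complemented:
`c_{0,I}` is the range of a continuous linear projection on ℓ∞. -/
theorem stronglyOmegaMax_complemented (I : Set (Set ℕ)) (h : StronglyOmegaMax I) :
    IdealComplemented I := by
  obtain ⟨J, -, -, ⟨U, hU, hd⟩, rfl⟩ := h
  exact stronglyOmegaMax_complemented_general hU hd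
end

section
/- Let I be an ideal on ℕ and let I^ω be the ideal on ℕ × ℕ defined by A ∈ I^ω if and only if {m : (n, m) ∈ A} ∈ I for every n ∈ ℕ. Then I is complemented (there is a continuous linear map P : ℓ∞ → ℓ∞ with P ∘ P = P and range c_{0,I}) if and only if I^ω is complemented in ℓ∞(ℕ × ℕ) (there is a continuous linear map Q : ℓ∞(ℕ × ℕ) → ℓ∞(ℕ × ℕ) with Q ∘ Q = Q and range c_{0,I^ω}, where c_{0,I^ω} = {x ∈ ℓ∞(ℕ × ℕ) : ∀ ε > 0, {p : ε ≤ |x p|} ∈ I^ω}). -/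
open Set

/-- The ideal `I^ω` on `ℕ × ℕ`: `A ∈ I^ω` iff every vertical section of `A` is in `I`. -/
def idealOmega (I : Set (Set ℕ)) : Set (Set (ℕ × ℕ)) :=
  {A | ∀ n : ℕ, {m : ℕ | (n, m) ∈ A} ∈ I}

/-- ℓ∞(ℕ × ℕ). -/
noncomputable abbrev ellInf2 := lp (fun _ : ℕ × ℕ => ℝ) ⊤

/-- `c_{0,K}` inside ℓ∞(ℕ × ℕ) for a collection `K` of subsets of `ℕ × ℕ`. -/
def c0I2 (K : Set (Set (ℕ × ℕ))) : Set ellInf2 :=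
  {x | ∀ ε > 0, {p : ℕ × ℕ | ε ≤ |x p|} ∈ K}

/-! A projection `P` of `ℓ∞` onto `c_{0,I}`, applied to every row of an array, is a projection of
`ℓ∞(ℕ × ℕ)` onto `c_{0,I^ω}`, because `x ∈ c_{0,I^ω}` iff each row of `x` lies in `c_{0,I}`.
Conversely, `c_{0,I}` is a retract of `c_{0,I^ω}`: embed a sequence as the array all of whose rows
equal it, apply the projection of `ℓ∞(ℕ × ℕ)`, and read off one row. -/

open scoped ENNReal NNReal lp

section Projection

variable {𝕜 E F : Type*} [Semiring 𝕜] [TopologicalSpace E] [AddCommMonoid E] [Module 𝕜 E]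
  [TopologicalSpace F] [AddCommMonoid F] [Module 𝕜 F]

variable (𝕜) in
/-- `S` is the range of a continuous linear projection, i.e. `S` is complemented. The set `S` is not
bundled as a submodule, so that this applies to `c_{0,I}` for families `I` that are not ideals. -/
def IsProjectionRange (S : Set E) : Prop :=
  ∃ P : E →L[𝕜] E, (∀ x, P (P x) = P x) ∧ range P = S

theorem idempotent_and_range_eq_iff {α : Type*} {f : α → α} {S : Set α} :
    ((∀ x, f (f x) = f x) ∧ range f = S) ↔ (∀ x, f x ∈ S) ∧ ∀ x ∈ S, f x = x := by
  constructor
  · rintro ⟨hf, rfl⟩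
    exact ⟨mem_range_self, forall_mem_range.2 hf⟩
  · rintro ⟨hmem, hfix⟩
    exact ⟨fun x => hfix _ (hmem x),
      (range_subset_iff.2 hmem).antisymm fun x hx => ⟨x, hfix x hx⟩⟩

theorem isProjectionRange_iff {S : Set E} :
    IsProjectionRange 𝕜 S ↔ ∃ P : E →L[𝕜] E, (∀ x, P x ∈ S) ∧ ∀ x ∈ S, P x = x :=
  exists_congr fun _ => idempotent_and_range_eq_iff

theorem IsProjectionRange.of_retract {S : Set E} {T : Set F} (hT : IsProjectionRange 𝕜 T)
    (j : E →L[𝕜] F) (r : F →L[𝕜] E) (hrj : ∀ x, r (j x) = x) (hj : MapsTo j S T)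
    (hr : MapsTo r T S) : IsProjectionRange 𝕜 S := by
  obtain ⟨Q, hmem, hfix⟩ := isProjectionRange_iff.1 hT
  refine isProjectionRange_iff.2 ⟨r ∘L Q ∘L j, fun x => hr (hmem (j x)), fun x hx => ?_⟩
  calc r (Q (j x)) = r (j x) := congrArg r (hfix _ (hj hx))
    _ = x := hrj x

end Projection

section BoundedFamilies

variable {𝕜 E F ι κ κ' : Type*} [NontriviallyNormedField 𝕜]
  [NormedAddCommGroup E] [NormedSpace 𝕜 E] [SeminormedAddCommGroup F] [NormedSpace 𝕜 F]

/-- The operator `x ↦ (T k x)ₖ` into `ℓ∞(κ, E)` with coordinates `T k`, where the `T k` are bounded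
by a common constant `C`. -/
noncomputable def lpInftyOfBounded (T : κ → F →ₗ[𝕜] E) (C : ℝ≥0)
    (hT : ∀ k x, ‖T k x‖ ≤ C * ‖x‖) : F →L[𝕜] ℓ^∞(κ, E) :=
  LinearMap.mkContinuous
    { toFun x := ⟨fun k => T k x, memℓp_infty ⟨C * ‖x‖, forall_mem_range.2 fun k => hT k x⟩⟩
      map_add' x y := by ext k; exact (T k).map_add x y
      map_smul' c x := by ext k; exact (T k).map_smul c x }
    C fun x => lp.norm_le_of_forall_le (by positivity) fun k => hT k x

variable (𝕜 E) in
/-- Composition with `f : κ' → κ`, as an operator `ℓ∞(κ, E) → ℓ∞(κ', E)`. For `f = (i, ·)` it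
restricts to the `i`-th row; for `f = Prod.snd` it repeats one row constantly. -/
noncomputable def lpInftyComp (f : κ' → κ) : ℓ^∞(κ, E) →L[𝕜] ℓ^∞(κ', E) :=
  lpInftyOfBounded (fun k => lp.evalₗ (fun _ => E) ∞ (f k)) 1 fun k x => by
    simpa using lp.norm_apply_le_norm ENNReal.top_ne_zero x (f k)

@[simp]
theorem lpInftyComp_apply (f : κ' → κ) (x : ℓ^∞(κ, E)) (k : κ') :
    lpInftyComp 𝕜 E f x k = x (f k) := rfl

theorem norm_lpInftyComp_apply_le (f : κ' → κ) (x : ℓ^∞(κ, E)) : ‖lpInftyComp 𝕜 E f x‖ ≤ ‖x‖ :=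
  lp.norm_le_of_forall_le (norm_nonneg x) fun k =>
    lp.norm_apply_le_norm ENNReal.top_ne_zero x (f k)

variable (𝕜) in
theorem lpInfty_ext_rows {x y : ℓ^∞(ι × κ, E)}
    (h : ∀ i, lpInftyComp 𝕜 E (Prod.mk i) x = lpInftyComp 𝕜 E (Prod.mk i) y) : x = y := by
  ext ⟨i, k⟩
  simpa only [lpInftyComp_apply] using congrArg (fun z : ℓ^∞(κ, E) => z k) (h i)

/-- The operator on `ℓ∞(ι × κ, E)` that applies `P` to each row. -/
noncomputable def lpInftyRowwise (ι : Type*) (P : ℓ^∞(κ, E) →L[𝕜] ℓ^∞(κ, E)) :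
    ℓ^∞(ι × κ, E) →L[𝕜] ℓ^∞(ι × κ, E) :=
  lpInftyOfBounded
    (fun p => lp.evalₗ (fun _ => E) ∞ p.2 ∘ₗ ↑(P ∘L lpInftyComp 𝕜 E (Prod.mk p.1))) ‖P‖₊
    fun p x =>
      calc ‖P (lpInftyComp 𝕜 E (Prod.mk p.1) x) p.2‖
        _ ≤ ‖P (lpInftyComp 𝕜 E (Prod.mk p.1) x)‖ :=
          lp.norm_apply_le_norm ENNReal.top_ne_zero _ p.2
        _ ≤ ‖P‖ * ‖x‖ := P.le_opNorm_of_le (norm_lpInftyComp_apply_le _ x)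

theorem row_lpInftyRowwise (P : ℓ^∞(κ, E) →L[𝕜] ℓ^∞(κ, E)) (x : ℓ^∞(ι × κ, E)) (i : ι) :
    lpInftyComp 𝕜 E (Prod.mk i) (lpInftyRowwise ι P x) = P (lpInftyComp 𝕜 E (Prod.mk i) x) := rfl

end BoundedFamilies

section Rows

variable {𝕜 E ι κ : Type*} [NontriviallyNormedField 𝕜] [NormedAddCommGroup E] [NormedSpace 𝕜 E]

/-- `c_{0,I}` in `ℓ∞(κ, E)`, for an arbitrary family `I` of subsets of `κ`. -/
def czeroAlong (E : Type*) [NormedAddCommGroup E] (I : Set (Set κ)) : Set ℓ^∞(κ, E) :=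
  {x | ∀ ε > 0, {k | ε ≤ ‖x k‖} ∈ I}

/-- The family of subsets of `ι × κ` all of whose sections `{k | (i, k) ∈ A}` belong to `I`; for
`ι = ℕ` this is `I^ω`. -/
def sectionwise (ι : Type*) (I : Set (Set κ)) : Set (Set (ι × κ)) :=
  {A | ∀ i, {k | (i, k) ∈ A} ∈ I}

variable (𝕜) in
theorem mem_czeroAlong_sectionwise_iff {I : Set (Set κ)} {x : ℓ^∞(ι × κ, E)} :
    x ∈ czeroAlong E (sectionwise ι I) ↔
      ∀ i, lpInftyComp 𝕜 E (Prod.mk i) x ∈ czeroAlong E I :=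
  ⟨fun h i ε hε => h ε hε i, fun h ε hε i => h i ε hε⟩

theorem IsProjectionRange.czeroAlong_sectionwise {I : Set (Set κ)}
    (h : IsProjectionRange 𝕜 (czeroAlong E I)) :
    IsProjectionRange 𝕜 (czeroAlong E (sectionwise ι I)) := by
  obtain ⟨P, hmem, hfix⟩ := isProjectionRange_iff.1 h
  refine isProjectionRange_iff.2 ⟨lpInftyRowwise ι P, fun x => ?_, fun x hx => ?_⟩
  · exact (mem_czeroAlong_sectionwise_iff 𝕜).2 fun i => hmem (lpInftyComp 𝕜 E (Prod.mk i) x)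
  · refine lpInfty_ext_rows 𝕜 fun i => ?_
    rw [row_lpInftyRowwise, hfix _ ((mem_czeroAlong_sectionwise_iff 𝕜).1 hx i)]

theorem IsProjectionRange.of_czeroAlong_sectionwise [Nonempty ι] {I : Set (Set κ)}
    (h : IsProjectionRange 𝕜 (czeroAlong E (sectionwise ι I))) :
    IsProjectionRange 𝕜 (czeroAlong E I) := by
  obtain ⟨i⟩ := ‹Nonempty ι›
  exact h.of_retract (lpInftyComp 𝕜 E Prod.snd) (lpInftyComp 𝕜 E (Prod.mk i))
    (fun _ => by ext; simp only [lpInftyComp_apply])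
    (fun _ hx => (mem_czeroAlong_sectionwise_iff 𝕜).2 fun _ => hx)
    (fun _ hx => (mem_czeroAlong_sectionwise_iff 𝕜).1 hx i)

theorem complemented_iff_omega_complemented_general [Nonempty ι] (I : Set (Set κ)) :
    IsProjectionRange 𝕜 (czeroAlong E I) ↔
      IsProjectionRange 𝕜 (czeroAlong E (sectionwise ι I)) :=
  ⟨.czeroAlong_sectionwise, .of_czeroAlong_sectionwise⟩

end Rows

/-- `I` is complemented iff `I^ω` is complemented in ℓ∞(ℕ × ℕ). -/
theorem complemented_iff_omega_complemented (I : Set (Set ℕ)) (hI : IsIdeal I) :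
    IdealComplemented I ↔
      ∃ Q : ellInf2 →L[ℝ] ellInf2, (∀ x, Q (Q x) = Q x) ∧
        Set.range Q = c0I2 (idealOmega I) :=
  complemented_iff_omega_complemented_general I
end

section
/- Let I be a strongly ω-maximal ideal on ℕ. Then there exists a continuous linear map Q : ℓ∞ → ℓ∞ such that: Q ∘ Q = Q; Q is positive (if x n ≥ 0 for all n then (Q x) n ≥ 0 for all n); the kernel of Q is exactly c_{0,I}; for every A ⊆ ℕ there is a set T(A) ⊆ ℕ with Q(χ_A) = χ_{T(A)}, and Q(χ_ℕ) = χ_ℕ; if A ⊆ B then T(A) ⊆ T(B); T(T(A)) = T(A) for all A ⊆ ℕ; T(A ∩ B) = T(A) ∩ T(B) for all A, B ⊆ ℕ; and the family ℬ = {B ⊆ ℕ : T(B) = B} is closed under arbitrary nonempty intersections. -/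
open Set

/-!
Send `x` to its limits along a family of ultrafilters `V a`, indexed by the same set `α` on which
the functions live: `(Q x) a = lim_{V a} x`. If every `V a` gives measure one to its own fibre
`{b | V b = V a}`, then `Q x` is `V a`-almost everywhere equal to the constant `(Q x) a`, so
`Q ∘ Q = Q`, and the sets fixed by `T A = {a | A ∈ V a}` are exactly the unions of fibres of `V`.
The kernel of `Q` consists of the `x` tending to `0` along every `V a`; when the `V a` range over
the ultrafilters dual to maximal ideals `J n`, this is `c_{0,I}` for `I = ⋂ n, J n`.

Such a `V` exists with range any nonempty countable discrete set of ultrafilters: discreteness gives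
each member a set belonging to no other member, and `V` sends a point to the first member in whose
set it lies; finitely many earlier sets do not disturb an ultrafilter to which they do not belong.
-/

open Filter Topology
open scoped ENNReal lp

variable {α β : Type*}

theorem tendsto_limUnder_of_isBounded_range {X : Type*} [PseudoMetricSpace X] [ProperSpace X]
    [Nonempty X] {f : α → X} (hf : Bornology.IsBounded (range f)) (U : Ultrafilter α) :
    Tendsto f U (𝓝 (limUnder U f)) := by
  have hmem : closure (range f) ∈ (U.map f : Filter X) :=
    mem_map.2 (univ_mem' fun a => subset_closure (mem_range_self a))
  obtain ⟨L, -, hL⟩ := hf.isCompact_closure.ultrafilter_le_nhds' (U.map f) hmem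
  exact tendsto_nhds_limUnder ⟨L, hL⟩

theorem isBounded_range_lp {E : Type*} [NormedAddCommGroup E] (x : ℓ^∞(α, E)) :
    Bornology.IsBounded (range x) :=
  isBounded_iff_forall_norm_le.2
    ⟨‖x‖, forall_mem_range.2 (lp.norm_apply_le_norm ENNReal.top_ne_zero x)⟩

section LimitOp

variable (𝕜 : Type*) {E : Type*} [NormedField 𝕜] [NormedAddCommGroup E] [NormedSpace 𝕜 E]
  [ProperSpace E]

theorem tendsto_limUnder_lp (U : Ultrafilter α) (x : ℓ^∞(α, E)) :
    Tendsto x U (𝓝 (limUnder U x)) :=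
  tendsto_limUnder_of_isBounded_range (isBounded_range_lp x) U

theorem norm_limUnder_lp_le (U : Ultrafilter α) (x : ℓ^∞(α, E)) :
    ‖limUnder (U : Filter α) x‖ ≤ ‖x‖ :=
  le_of_tendsto' (tendsto_limUnder_lp U x).norm (lp.norm_apply_le_norm ENNReal.top_ne_zero x)

/-- The operator taking a bounded function `x` to the family of its limits along the ultrafilters
`V b`. The value of `limUnder` is never junk here, since bounded subsets of `E` are relatively
compact. -/
noncomputable def limitOp (V : β → Ultrafilter α) : ℓ^∞(α, E) →L[𝕜] ℓ^∞(β, E) :=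
  LinearMap.mkContinuous
    { toFun x := ⟨fun b => limUnder (V b : Filter α) x,
        memℓp_infty ⟨‖x‖, forall_mem_range.2 fun b => norm_limUnder_lp_le (V b) x⟩⟩
      map_add' x y := lp.ext <| funext fun b =>
        ((tendsto_limUnder_lp (V b) x).add (tendsto_limUnder_lp (V b) y)).limUnder_eq
      map_smul' c x := lp.ext <| funext fun b =>
        ((tendsto_limUnder_lp (V b) x).const_smul c).limUnder_eq }
    1 fun x => by
      rw [one_mul]
      exact lp.norm_le_of_forall_le (norm_nonneg x) fun b => norm_limUnder_lp_le (V b) x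

theorem limitOp_apply (V : β → Ultrafilter α) (x : ℓ^∞(α, E)) (b : β) :
    limitOp 𝕜 V x b = limUnder (V b : Filter α) x :=
  rfl

variable {𝕜}

theorem limitOp_apply_eq_iff {V : β → Ultrafilter α} {x : ℓ^∞(α, E)} {b : β} {e : E} :
    limitOp 𝕜 V x b = e ↔ Tendsto x (V b) (𝓝 e) :=
  ⟨fun h => h ▸ tendsto_limUnder_lp (V b) x, Tendsto.limUnder_eq⟩

theorem limitOp_eq_zero_iff {V : β → Ultrafilter α} {x : ℓ^∞(α, E)} :
    limitOp 𝕜 V x = 0 ↔ ∀ b, Tendsto x (V b) (𝓝 0) := by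
  simp only [lp.ext_iff, funext_iff, lp.coeFn_zero, Pi.zero_apply, limitOp_apply_eq_iff]

theorem limitOp_nonneg (V : β → Ultrafilter α) {x : ℓ^∞(α, ℝ)} (hx : ∀ a, 0 ≤ x a) (b : β) :
    0 ≤ limitOp ℝ V x b :=
  ge_of_tendsto' (limitOp_apply_eq_iff.1 rfl) hx

end LimitOp

/-- The indicator function of `A` as an element of `ℓ^∞(α, ℝ)`; on `ℕ` this is `chi A`. -/
noncomputable def lpIndicator (A : Set α) : ℓ^∞(α, ℝ) :=
  ⟨A.indicator fun _ => 1, memℓp_infty ⟨1, forall_mem_range.2 fun _ =>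
    (norm_indicator_le_norm_self _ _).trans norm_one.le⟩⟩

/-- The set operation `T` induced by a family of ultrafilters: `limitSet V A` is the set of indices
of the members of the family that contain `A`. -/
def limitSet (V : β → Ultrafilter α) (A : Set α) : Set β :=
  {b | A ∈ V b}

theorem mem_limitSet {V : β → Ultrafilter α} {A : Set α} {b : β} : b ∈ limitSet V A ↔ A ∈ V b :=
  Iff.rfl

theorem limitOp_lpIndicator (V : β → Ultrafilter α) (A : Set α) :
    limitOp ℝ V (lpIndicator A) = lpIndicator (limitSet V A) := by
  ext b
  refine limitOp_apply_eq_iff.2 (tendsto_const_nhds.congr' ?_)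
  by_cases hA : A ∈ V b
  · filter_upwards [hA] with a ha
    simp [lpIndicator, mem_limitSet, hA, ha]
  · filter_upwards [Ultrafilter.compl_mem_iff_notMem.2 hA] with a ha
    simp [lpIndicator, mem_limitSet, hA, notMem_of_mem_compl ha]

theorem limitSet_univ (V : β → Ultrafilter α) : limitSet V univ = univ :=
  eq_univ_of_forall fun _ => univ_mem

theorem limitSet_mono (V : β → Ultrafilter α) : Monotone (limitSet V) :=
  fun _ _ hAB _ hA => mem_of_superset hA hAB

theorem limitSet_inter (V : β → Ultrafilter α) (A B : Set α) :
    limitSet V (A ∩ B) = limitSet V A ∩ limitSet V B :=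
  ext fun _ => inter_mem_iff

/-- Each ultrafilter `V a` is concentrated on its own fibre of `V`. This is what makes
`limitOp 𝕜 V` and `limitSet V` idempotent. -/
def IsFiberConcentrated (V : α → Ultrafilter α) : Prop :=
  ∀ a, ∀ᶠ b in V a, V b = V a

namespace IsFiberConcentrated

variable {V : α → Ultrafilter α}

theorem limitOp_limitOp {𝕜 E : Type*} [NormedField 𝕜] [NormedAddCommGroup E] [NormedSpace 𝕜 E]
    [ProperSpace E] (hV : IsFiberConcentrated V) (x : ℓ^∞(α, E)) :
    limitOp 𝕜 V (limitOp 𝕜 V x) = limitOp 𝕜 V x := by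
  ext a
  refine limitOp_apply_eq_iff.2 (tendsto_const_nhds.congr' ?_)
  filter_upwards [hV a] with b hb
  rw [limitOp_apply, limitOp_apply, hb]

theorem limitSet_eq_self_iff (hV : IsFiberConcentrated V) {B : Set α} :
    limitSet V B = B ↔ ∀ ⦃a b⦄, V a = V b → a ∈ B → b ∈ B := by
  constructor
  · intro hB a b hab ha
    rw [← hB, mem_limitSet] at ha ⊢
    exact hab ▸ ha
  · refine fun hB => Subset.antisymm (fun a ha => ?_) fun a ha => ?_
    · obtain ⟨b, hbB, hba⟩ := (V a).nonempty_of_mem (inter_mem ha (hV a))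
      exact hB hba hbB
    · filter_upwards [hV a] with b hba
      exact hB hba.symm ha

theorem limitSet_limitSet (hV : IsFiberConcentrated V) (A : Set α) :
    limitSet V (limitSet V A) = limitSet V A :=
  hV.limitSet_eq_self_iff.2 fun a b hab ha => by rwa [mem_limitSet, ← hab]

theorem limitSet_sInter (hV : IsFiberConcentrated V) {𝒞 : Set (Set α)}
    (h𝒞 : ∀ B ∈ 𝒞, limitSet V B = B) : limitSet V (⋂₀ 𝒞) = ⋂₀ 𝒞 :=
  hV.limitSet_eq_self_iff.2 fun _ _ hab ha B hB =>
    hV.limitSet_eq_self_iff.1 (h𝒞 B hB) hab (ha B hB)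

end IsFiberConcentrated

theorem IsDiscreteSubset.exists_separating_mem {S : Set (Ultrafilter α)} (hS : IsDiscreteSubset S)
    {U : Ultrafilter α} (hU : U ∈ S) : ∃ B ∈ U, ∀ W ∈ S, B ∈ W → W = U := by
  obtain ⟨O, hO, hOS⟩ := hS U hU
  have hUO : U ∈ O := (hOS.symm.subset rfl).1
  obtain ⟨_, ⟨B, rfl⟩, hBU, hBO⟩ :=
    ultrafilterBasis_is_basis.exists_subset_of_mem_open hUO hO
  exact ⟨B, hBU, fun W hW hBW => hOS.subset ⟨hBO hBW, hW⟩⟩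

theorem IsDiscreteSubset.exists_isFiberConcentrated {S : Set (Ultrafilter α)}
    (hS : IsDiscreteSubset S) (hcount : S.Countable) (hne : S.Nonempty) :
    ∃ V : α → Ultrafilter α, IsFiberConcentrated V ∧ range V = S := by
  classical
  obtain ⟨U, rfl⟩ := hcount.exists_eq_range hne
  choose B hBU hB using fun n => hS.exists_separating_mem (mem_range_self n)
  let V (a : α) : Ultrafilter α := if h : ∃ n, a ∈ B n then U (Nat.find h) else U 0
  have hV_mem (a : α) : ∃ n, V a = U n := by
    by_cases h : ∃ n, a ∈ B n
    · exact ⟨Nat.find h, dif_pos h⟩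
    · exact ⟨0, dif_neg h⟩
  have hV_eq (n : ℕ) : ∀ᶠ a in U n, V a = U n := by
    have earlier : ∀ᶠ a in U n, ∀ m ∈ Iic n, a ∈ B m → U m = U n := by
      refine (eventually_all_finite (finite_Iic n)).2 fun m _ => ?_
      refine Ultrafilter.eventually_imp.2 fun hm => Eventually.of_forall fun _ => ?_
      exact (hB m (U n) (mem_range_self n) hm).symm
    filter_upwards [hBU n, earlier] with a ha hfirst
    have h : ∃ m, a ∈ B m := ⟨n, ha⟩
    exact (dif_pos h).trans (hfirst _ (Nat.find_min' h ha) (Nat.find_spec h))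
  refine ⟨V, fun a => ?_, Subset.antisymm ?_ ?_⟩
  · obtain ⟨n, hn⟩ := hV_mem a
    exact hn ▸ hV_eq n
  · rintro _ ⟨a, rfl⟩
    obtain ⟨n, hn⟩ := hV_mem a
    exact ⟨n, hn.symm⟩
  · rintro _ ⟨n, rfl⟩
    exact (hV_eq n).exists

theorem IsDualUltra.mem_iff_eventually_notMem {K : Set (Set ℕ)} {U : Ultrafilter ℕ}
    (h : IsDualUltra K U) {A : Set ℕ} : A ∈ K ↔ ∀ᶠ n in U, n ∉ A := by
  rw [← compl_compl A, ← h, compl_compl]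
  rfl

theorem mem_c0I_iInter_iff {ι : Sort*} {J : ι → Set (Set ℕ)} {U : ι → Ultrafilter ℕ}
    (hU : ∀ i, IsDualUltra (J i) (U i)) {x : ellInf} :
    x ∈ c0I (⋂ i, J i) ↔ ∀ i, Tendsto x (U i) (𝓝 0) := by
  simp only [c0I, mem_ofPred_eq, mem_iInter, (hU _).mem_iff_eventually_notMem, not_le,
    Metric.tendsto_nhds, dist_zero_right, Real.norm_eq_abs]
  exact ⟨fun h i ε hε => h ε hε i, fun h ε hε i => h i ε hε⟩

theorem stronglyOmegaMax_projection_general {S : Set (Ultrafilter α)} (hS : IsDiscreteSubset S)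
    (hcount : S.Countable) (hne : S.Nonempty) :
    ∃ (Q : ℓ^∞(α, ℝ) →L[ℝ] ℓ^∞(α, ℝ)) (T : Set α → Set α),
      (∀ x, Q (Q x) = Q x) ∧
      (∀ x : ℓ^∞(α, ℝ), (∀ a, 0 ≤ x a) → ∀ a, 0 ≤ Q x a) ∧
      (∀ x : ℓ^∞(α, ℝ), Q x = 0 ↔ ∀ U ∈ S, Tendsto x U (𝓝 0)) ∧
      (∀ A, Q (lpIndicator A) = lpIndicator (T A)) ∧
      Q (lpIndicator univ) = lpIndicator univ ∧
      (∀ A B, A ⊆ B → T A ⊆ T B) ∧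
      (∀ A, T (T A) = T A) ∧
      (∀ A B, T (A ∩ B) = T A ∩ T B) ∧
      (∀ 𝒞 : Set (Set α), (∀ B ∈ 𝒞, T B = B) → T (⋂₀ 𝒞) = ⋂₀ 𝒞) := by
  obtain ⟨V, hV, rfl⟩ := hS.exists_isFiberConcentrated hcount hne
  refine ⟨limitOp ℝ V, limitSet V, hV.limitOp_limitOp, fun _ => limitOp_nonneg V,
    fun _ => ?_, limitOp_lpIndicator V, ?_,
    fun _ _ hAB => limitSet_mono V hAB, hV.limitSet_limitSet, limitSet_inter V,
    fun _ => hV.limitSet_sInter⟩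
  · rw [limitOp_eq_zero_iff, forall_mem_range]
  · rw [limitOp_lpIndicator, limitSet_univ]

/-- For a strongly ω-maximal ideal `I`, there is a positive continuous linear projection `Q`
on ℓ∞ with kernel `c_{0,I}`, mapping indicator sequences to indicator sequences via a map
`T` which is monotone, idempotent, meet-preserving, fixes `ℕ`, and whose family of fixed
sets is closed under arbitrary nonempty intersections. -/
theorem stronglyOmegaMax_projection (I : Set (Set ℕ)) (h : StronglyOmegaMax I) :
    ∃ (Q : ellInf →L[ℝ] ellInf) (T : Set ℕ → Set ℕ),
      (∀ x, Q (Q x) = Q x) ∧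
      (∀ x : ellInf, (∀ n, 0 ≤ x n) → ∀ n, 0 ≤ (Q x) n) ∧
      (∀ x : ellInf, Q x = 0 ↔ x ∈ c0I I) ∧
      (∀ A : Set ℕ, Q (chi A) = chi (T A)) ∧
      Q (chi Set.univ) = chi Set.univ ∧
      (∀ A B : Set ℕ, A ⊆ B → T A ⊆ T B) ∧
      (∀ A : Set ℕ, T (T A) = T A) ∧
      (∀ A B : Set ℕ, T (A ∩ B) = T A ∩ T B) ∧
      (∀ 𝒞 : Set (Set ℕ), 𝒞.Nonempty → (∀ B ∈ 𝒞, T B = B) → T (⋂₀ 𝒞) = ⋂₀ 𝒞) := by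
  obtain ⟨J, -, -, ⟨U, hU, hdisc⟩, rfl⟩ := h
  obtain ⟨Q, T, hQQ, hpos, hker, hchi, huniv, hmono, hTT, hinter, hsInter⟩ :=
    stronglyOmegaMax_projection_general hdisc (countable_range U) (range_nonempty U)
  exact ⟨Q, T, hQQ, hpos,
    fun x => (hker x).trans (forall_mem_range.trans (mem_c0I_iInter_iff hU).symm),
    hchi, huniv, hmono, hTT, hinter, fun 𝒞 _ => hsInter 𝒞⟩
end

section
/- Let I be a proper ideal on ℕ. If I is complemented, then every I-AD family of subsets of ℕ is countable. -/
open Set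

/-- An `I`-almost disjoint family: no member is in `I` and pairwise intersections are in `I`. -/
def IADFamily (I : Set (Set ℕ)) (𝒜 : Set (Set ℕ)) : Prop :=
  (∀ A ∈ 𝒜, A ∉ I) ∧ ∀ A ∈ 𝒜, ∀ B ∈ 𝒜, A ≠ B → A ∩ B ∈ I

/-
A functional `φ` on ℓ∞ that vanishes on `c_{0,I}` can be nonzero on only countably many members of
an `I`-AD family. Indeed, finitely many members become disjoint after removing a set of `I`, which
does not change the values `φ (chi A)`, and for disjoint sets a signed sum of indicators has norm at
most one, so that `∑ |φ (chi A)| ≤ ‖φ‖`. If `c_{0,I}` is complemented by a projection `P`, it is the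
common kernel of the countably many coordinate functionals of `1 - P`, and each member of the family
must be seen by one of them because its indicator is not in `c_{0,I}`.
-/

theorem chi_apply (A : Set ℕ) (n : ℕ) : chi A n = A.indicator (fun _ => (1 : ℝ)) n := rfl

theorem chi_sdiff_add_chi_inter (A B : Set ℕ) : chi (A \ B) + chi (A ∩ B) = chi A := by
  ext n
  by_cases hA : n ∈ A <;> by_cases hB : n ∈ B <;> simp [chi_apply, hA, hB]

theorem norm_sum_smul_chi_le {ι : Type*} {s : Finset ι} {f : ι → Set ℕ}
    (hf : (s : Set ι).PairwiseDisjoint f) {a : ι → ℝ} {C : ℝ} (hC : 0 ≤ C)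
    (ha : ∀ i ∈ s, |a i| ≤ C) : ‖∑ i ∈ s, a i • chi (f i)‖ ≤ C := by
  refine lp.norm_le_of_forall_le hC fun n => ?_
  calc ‖(∑ i ∈ s, a i • chi (f i) : ellInf) n‖
      = |∑ i ∈ s, a i * chi (f i) n| := by
        rw [lp.coeFn_sum, Finset.sum_apply]; rfl
    _ ≤ ∑ i ∈ s, |a i * chi (f i) n| := Finset.abs_sum_le_sum_abs _ _
    _ ≤ ∑ i ∈ s, (f i).indicator (fun _ => C) n := by
        refine Finset.sum_le_sum fun i hi => ?_
        by_cases hn : n ∈ f i <;> simp [chi_apply, hn, ha i hi]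
    _ = (⋃ i ∈ s, f i).indicator (fun _ => C) n :=
        (Finset.indicator_biUnion_apply s f hf n).symm
    _ ≤ C := Set.indicator_le_self' (fun _ _ => hC) n

theorem sum_abs_apply_chi_le_norm {ι : Type*} {s : Finset ι} {f : ι → Set ℕ}
    (hf : (s : Set ι).PairwiseDisjoint f) (φ : ellInf →L[ℝ] ℝ) :
    ∑ i ∈ s, |φ (chi (f i))| ≤ ‖φ‖ := by
  let ε : ι → ℝ := fun i => SignType.sign (φ (chi (f i)))
  have hε : ∀ i ∈ s, |ε i| ≤ 1 := fun i _ => by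
    cases h : SignType.sign (φ (chi (f i))) <;> simp [ε, h]
  calc ∑ i ∈ s, |φ (chi (f i))|
      = φ (∑ i ∈ s, ε i • chi (f i)) := by
        simp only [map_sum, map_smul, smul_eq_mul, ε, sign_mul_self]
    _ ≤ ‖φ (∑ i ∈ s, ε i • chi (f i))‖ := le_abs_self _
    _ ≤ ‖φ‖ * 1 := φ.le_opNorm_of_le (norm_sum_smul_chi_le hf zero_le_one hε)
    _ = ‖φ‖ := mul_one _

namespace IsIdeal

variable {I : Set (Set ℕ)} (hI : IsIdeal I)

include hI

theorem biUnion_mem {ι : Type*} {s : Finset ι} {f : ι → Set ℕ} (hf : ∀ i ∈ s, f i ∈ I) :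
    (⋃ i ∈ s, f i) ∈ I := by
  classical
  induction s using Finset.induction_on with
  | empty => simpa using hI.1 ∅ Set.finite_empty
  | insert a s _ ih =>
    rw [Finset.forall_mem_insert] at hf
    rw [Finset.set_biUnion_insert]
    exact hI.2.2 _ _ hf.1 (ih hf.2)

theorem chi_mem_c0I_iff {A : Set ℕ} : chi A ∈ c0I I ↔ A ∈ I := by
  refine ⟨fun h => hI.2.1 _ _ (fun n hn => ?_) (h 1 one_pos), fun h ε hε => hI.2.1 _ _ ?_ h⟩
  · simp [chi_apply, hn]
  · intro n hn
    by_contra hnA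
    exact hε.not_ge (by simpa [chi_apply, hnA] using hn)

theorem apply_chi_sdiff {φ : ellInf →L[ℝ] ℝ} (hφ : ∀ x ∈ c0I I, φ x = 0) (A : Set ℕ) {D : Set ℕ}
    (hD : D ∈ I) : φ (chi (A \ D)) = φ (chi A) := by
  have hAD : chi (A ∩ D) ∈ c0I I := hI.chi_mem_c0I_iff.2 (hI.2.1 _ _ Set.inter_subset_right hD)
  rw [← chi_sdiff_add_chi_inter A D, map_add, hφ _ hAD, add_zero]

theorem exists_mem_pairwiseDisjoint_sdiff {ι : Type*} {s : Finset ι} {f : ι → Set ℕ}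
    (hf : (s : Set ι).Pairwise fun i j => f i ∩ f j ∈ I) :
    ∃ D ∈ I, (s : Set ι).PairwiseDisjoint fun i => f i \ D := by
  classical
  refine ⟨⋃ p ∈ s.offDiag, f p.1 ∩ f p.2, hI.biUnion_mem fun p hp => ?_, ?_⟩
  · obtain ⟨h₁, h₂, hne⟩ := Finset.mem_offDiag.1 hp
    exact hf h₁ h₂ hne
  · intro i hi j hj hij
    refine Set.disjoint_left.2 fun n hni hnj => hni.2 ?_
    exact Set.mem_biUnion (x := (i, j)) (Finset.mem_offDiag.2 ⟨hi, hj, hij⟩) ⟨hni.1, hnj.1⟩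

theorem summable_abs_apply_chi {ι : Type*} {f : ι → Set ℕ}
    (hf : Pairwise fun i j => f i ∩ f j ∈ I) {φ : ellInf →L[ℝ] ℝ} (hφ : ∀ x ∈ c0I I, φ x = 0) :
    Summable fun i => |φ (chi (f i))| := by
  refine summable_of_sum_le (c := ‖φ‖) (fun _ => abs_nonneg _) fun s => ?_
  obtain ⟨D, hD, hdisj⟩ := hI.exists_mem_pairwiseDisjoint_sdiff (hf.set_pairwise (s : Set ι))
  simpa only [hI.apply_chi_sdiff hφ _ hD] using sum_abs_apply_chi_le_norm hdisj φ

end IsIdeal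

theorem IdealComplemented.exists_seq_functional {I : Set (Set ℕ)} (hc : IdealComplemented I) :
    ∃ φ : ℕ → ellInf →L[ℝ] ℝ, ∀ x, x ∈ c0I I ↔ ∀ n, φ n x = 0 := by
  obtain ⟨P, hP, hrange⟩ := hc
  have mem_c0I_iff (x : ellInf) : x ∈ c0I I ↔ P x = x := by
    rw [← hrange]
    exact ⟨by rintro ⟨z, rfl⟩; exact hP z, fun h => ⟨x, h⟩⟩
  refine ⟨fun n => lp.evalCLM ℝ (fun _ : ℕ => ℝ) ⊤ n ∘L (.id ℝ ellInf - P), fun x => ?_⟩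
  calc x ∈ c0I I ↔ x - P x = 0 := by rw [mem_c0I_iff, sub_eq_zero, eq_comm]
    _ ↔ ∀ n, (x - P x) n = 0 := lp.ext_iff.trans funext_iff

theorem countable_of_complemented_general {I : Set (Set ℕ)} (hI : IsIdeal I) {ι : Type*}
    [Countable ι] {φ : ι → ellInf →L[ℝ] ℝ} (hφ : ∀ x, x ∈ c0I I ↔ ∀ i, φ i x = 0)
    {𝒜 : Set (Set ℕ)} (hAD : IADFamily I 𝒜) : 𝒜.Countable := by
  have hpair : Pairwise fun A B : 𝒜 => (A : Set ℕ) ∩ B ∈ I := fun A B hne =>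
    hAD.2 A A.2 B B.2 (Subtype.coe_ne_coe.2 hne)
  have hcount (i : ι) : {A : 𝒜 | |φ i (chi A)| ≠ 0}.Countable :=
    (hI.summable_abs_apply_chi hpair fun x hx => (hφ x).1 hx i).countable_support
  have hcover (A : 𝒜) : ∃ i, |φ i (chi A)| ≠ 0 := by
    by_contra! h
    exact hAD.1 A A.2 (hI.chi_mem_c0I_iff.1 ((hφ _).2 fun i => abs_eq_zero.1 (h i)))
  refine Set.countable_univ_iff.1 ((Set.countable_iUnion hcount).mono fun A _ => ?_)
  exact Set.mem_iUnion.2 (hcover A)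

/-- If a proper ideal `I` is complemented, then every `I`-AD family is countable. -/
theorem countable_of_complemented (I : Set (Set ℕ)) (hI : IsProperIdeal I)
    (hc : IdealComplemented I) (𝒜 : Set (Set ℕ)) (hAD : IADFamily I 𝒜) :
    𝒜.Countable := by
  obtain ⟨φ, hφ⟩ := hc.exists_seq_functional
  exact countable_of_complemented_general hI.1 hφ hAD
end

section
/- Let I be a proper ideal on ℕ and suppose there is a continuous linear map P : ℓ∞ → ℓ∞ with P ∘ P = P and range equal to c_{0,I}, such that Q := id − P satisfies: for all A, B ⊆ ℕ and all n ∈ ℕ, if (Q χ_A)(n) ≠ 0 and (Q χ_B)(n) ≠ 0 then (Q χ_{A ∩ B})(n) ≠ 0. Then I is a countable intersection of maximal ideals: there exists a nonempty countable collection of maximal ideals on ℕ whose intersection equals I. -/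
open Set

/-!
Write `Q = id - P`. Since `P` is a projection onto `c_{0,I}`, a set `A` lies in `I` exactly when
`Q χ_A = 0`, so `I` is the intersection over `n` of the null sets of the finitely additive set
functions `A ↦ (Q χ_A)(n)`. By hypothesis no two disjoint sets are both charged by such a function;
hence its null sets form a maximal ideal, unless it vanishes identically, in which case it
contributes nothing to the intersection.
-/

/-- An ideal on `ℕ` is ω-maximal if it is the intersection of a nonempty countable collection of
maximal ideals. -/
def IsOmegaMaximal (I : Set (Set ℕ)) : Prop :=
  ∃ S : Set (Set (Set ℕ)), S.Countable ∧ S.Nonempty ∧ (∀ K ∈ S, IsMaxIdeal K) ∧ ⋂₀ S = I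

/-- A finitely additive set function, defined on all subsets of `α`, for which the intersection of
two sets of nonzero charge has nonzero charge. The charges need not be numbers, and no positivity
is assumed. The function that vanishes identically is allowed. -/
structure IsPrimeCharge {α M : Type*} [AddZeroClass M] (μ : Set α → M) : Prop where
  empty : μ ∅ = 0
  union : ∀ A B, Disjoint A B → μ (A ∪ B) = μ A + μ B
  inter : ∀ A B, μ A ≠ 0 → μ B ≠ 0 → μ (A ∩ B) ≠ 0

namespace IsPrimeCharge

variable {α M : Type*} [AddZeroClass M] {μ : Set α → M} {A B : Set α}

theorem eq_zero_or_eq_zero_of_disjoint (hμ : IsPrimeCharge μ) (hAB : Disjoint A B) :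
    μ A = 0 ∨ μ B = 0 := by
  by_contra! h
  exact hμ.inter A B h.1 h.2 (hAB.inter_eq ▸ hμ.empty)

theorem eq_zero_of_subset (hμ : IsPrimeCharge μ) (hAB : A ⊆ B) (hB : μ B = 0) : μ A = 0 := by
  have hsum : μ A + μ (B \ A) = 0 := by
    rw [← hμ.union A (B \ A) disjoint_sdiff_right, union_sdiff_cancel hAB, hB]
  rcases hμ.eq_zero_or_eq_zero_of_disjoint (disjoint_sdiff_right : Disjoint A (B \ A)) with
    hA | hdiff
  · exact hA
  · rwa [hdiff, add_zero] at hsum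

theorem union_eq_zero (hμ : IsPrimeCharge μ) (hA : μ A = 0) (hB : μ B = 0) : μ (A ∪ B) = 0 := by
  rw [← union_sdiff_self, hμ.union A (B \ A) disjoint_sdiff_right, hA,
    hμ.eq_zero_of_subset sdiff_subset hB, add_zero]

theorem isMaxIdeal_setOf_eq_zero {μ : Set ℕ → M} (hμ : IsPrimeCharge μ)
    (hfin : ∀ A : Set ℕ, A.Finite → μ A = 0) (huniv : μ univ ≠ 0) :
    IsMaxIdeal {A | μ A = 0} :=
  ⟨⟨⟨hfin, fun _ _ => hμ.eq_zero_of_subset, fun _ _ => hμ.union_eq_zero⟩, huniv⟩,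
    fun _ => hμ.eq_zero_or_eq_zero_of_disjoint disjoint_compl_right⟩

theorem isOmegaMaximal_setOf_forall_eq_zero {ι : Type*} [Countable ι] {μ : ι → Set ℕ → M}
    (hμ : ∀ i, IsPrimeCharge (μ i)) (hfin : ∀ A : Set ℕ, A.Finite → ∀ i, μ i A = 0)
    (huniv : ∃ i, μ i univ ≠ 0) :
    IsOmegaMaximal {A | ∀ i, μ i A = 0} := by
  refine ⟨(fun i => {A | μ i A = 0}) '' {i | μ i univ ≠ 0}, (to_countable _).image _,
    Set.Nonempty.image _ huniv, ?_, ?_⟩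
  · rintro _ ⟨i, hi, rfl⟩
    exact (hμ i).isMaxIdeal_setOf_eq_zero (fun A hA => hfin A hA i) hi
  · ext A
    simp only [sInter_image, mem_iInter₂, mem_ofPred_eq]
    refine ⟨fun h i => ?_, fun h i _ => h i⟩
    by_cases hi : μ i univ = 0
    · exact (hμ i).eq_zero_of_subset (subset_univ A) hi
    · exact h i hi

end IsPrimeCharge

theorem chi_empty : chi ∅ = 0 := by
  ext n
  simp [chi_apply]

theorem chi_union_of_disjoint {A B : Set ℕ} (hAB : Disjoint A B) :
    chi (A ∪ B) = chi A + chi B := by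
  ext n
  simp only [lp.coeFn_add, Pi.add_apply, chi_apply, indicator_union_of_disjoint hAB]

theorem chi_mem_c0I_iff {I : Set (Set ℕ)} (hI : IsLowerSet I) {A : Set ℕ} :
    chi A ∈ c0I I ↔ A ∈ I := by
  refine ⟨fun h => hI ?_ (h 1 one_pos), fun hA ε hε => hI ?_ hA⟩
  · intro n hn
    simp [chi_apply, hn]
  · intro n (hn : ε ≤ |chi A n|)
    by_contra hnA
    rw [chi_apply, indicator_of_notMem hnA, abs_zero] at hn
    exact hn.not_gt hε

theorem isPrimeCharge_map_chi {M : Type*} [AddZeroClass M] (φ : ellInf →+ M)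
    (hφ : ∀ A B, φ (chi A) ≠ 0 → φ (chi B) ≠ 0 → φ (chi (A ∩ B)) ≠ 0) :
    IsPrimeCharge fun A => φ (chi A) where
  empty := by rw [chi_empty, map_zero]
  union A B hAB := by rw [chi_union_of_disjoint hAB, map_add]
  inter := hφ

theorem mem_iff_forall_sub_map_chi_eq_zero {I : Set (Set ℕ)} (hI : IsLowerSet I)
    {P : ellInf → ellInf} (hP : ∀ x, P (P x) = P x) (hrange : range P = c0I I) (A : Set ℕ) :
    A ∈ I ↔ ∀ n, (chi A - P (chi A)) n = 0 :=
  calc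
    A ∈ I ↔ chi A ∈ range P := by rw [hrange, chi_mem_c0I_iff hI]
    _ ↔ P (chi A) = chi A := ⟨fun ⟨x, hx⟩ => hx ▸ hP x, fun h => ⟨_, h⟩⟩
    _ ↔ chi A - P (chi A) = 0 := by rw [sub_eq_zero, eq_comm]
    _ ↔ ∀ n, (chi A - P (chi A)) n = 0 := by rw [lp.ext_iff, funext_iff]; rfl

theorem omegaMax_of_complemented_Qmult_general (I : Set (Set ℕ)) (hI : IsProperIdeal I)
    (P : ellInf →+ ellInf) (hP : ∀ x, P (P x) = P x)
    (hrange : Set.range P = c0I I)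
    (hQ : ∀ (A B : Set ℕ) (n : ℕ),
      (chi A - P (chi A)) n ≠ 0 → (chi B - P (chi B)) n ≠ 0 →
        (chi (A ∩ B) - P (chi (A ∩ B))) n ≠ 0) :
    IsOmegaMaximal I := by
  obtain ⟨⟨hfin, hsub, -⟩, huniv⟩ := hI
  have hmem := mem_iff_forall_sub_map_chi_eq_zero (fun B A => hsub A B) hP hrange
  let φ (n : ℕ) : ellInf →+ ℝ :=
    (lp.evalₗ (𝕜 := ℝ) _ ⊤ n).toAddMonoidHom.comp (AddMonoidHom.id ellInf - P)
  have hφ (n : ℕ) : IsPrimeCharge fun A => φ n (chi A) :=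
    isPrimeCharge_map_chi (φ n) fun A B => hQ A B n
  have hI_eq : I = {A | ∀ n, φ n (chi A) = 0} := Set.ext hmem
  rw [hI_eq]
  exact IsPrimeCharge.isOmegaMaximal_setOf_forall_eq_zero hφ (fun A hA => (hmem A).1 (hfin A hA))
    (not_forall.1 fun h => huniv ((hmem univ).2 h))

/-- If `c_{0,I}` is complemented in ℓ∞ by a projection `P` such that `Q = id − P`
satisfies the multiplicative condition on indicator sequences, then `I` is a countable
intersection of maximal ideals (ω-maximal). -/
theorem omegaMax_of_complemented_Qmult (I : Set (Set ℕ)) (hI : IsProperIdeal I)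
    (P : ellInf →L[ℝ] ellInf) (hP : ∀ x, P (P x) = P x)
    (hrange : Set.range P = c0I I)
    (hQ : ∀ (A B : Set ℕ) (n : ℕ),
      (chi A - P (chi A)) n ≠ 0 → (chi B - P (chi B)) n ≠ 0 →
        (chi (A ∩ B) - P (chi (A ∩ B))) n ≠ 0) :
    ∃ S : Set (Set (Set ℕ)), S.Countable ∧ S.Nonempty ∧ (∀ K ∈ S, IsMaxIdeal K) ∧
      ⋂₀ S = I :=
  omegaMax_of_complemented_Qmult_general I hI (P : ellInf →+ ellInf) hP hrange hQ
end
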